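/- Minrank from maxrank: let V be a finite-dimensional vector space over a field k of characteristic ≠ 2, let Q be a linear subspace of the space of quadratic forms on V, and let r be a positive integer. Suppose that for every linear subspace Q' ⊆ Q there exists q ∈ Q' with dim(Q/Q') + rank(q) ≥ r. Let a and s be positive integers satisfying (2^a − 1)(s − 1) + a ≤ r. Then there exists an a-dimensional linear subspace Q' ⊆ Q such that every nonzero element of Q' has rank at least s. -/

import Mathlib

open scoped BigOperators

/-- The q-rank of a function `f : V → k`: the least `r` such that
`f = ∑ ℓᵢ · qᵢ` with `ℓᵢ` linear functionals and `qᵢ` quadratic forms on `V`,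
as an element of `ℕ∞` (`⊤` if no such expression exists). -/
noncomputable def qrank (k : Type*) [Field k] {V : Type*} [AddCommGroup V] [Module k V]
    (f : V → k) : ℕ∞ :=
  sInf {r : ℕ∞ | ∃ m : ℕ, r = m ∧
    ∃ (ℓ : Fin m → (V →ₗ[k] k)) (q : Fin m → QuadraticForm k V),
      ∀ v, f v = ∑ i, ℓ i v * q i v}

/-- `f : V → k` is a cubic form: `f v = T (v,v,v)` for a symmetric trilinear map `T`. -/
def IsCubicForm (k : Type*) [Field k] {V : Type*} [AddCommGroup V] [Module k V]
    (f : V → k) : Prop :=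
  ∃ T : V →ₗ[k] V →ₗ[k] V →ₗ[k] k,
    (∀ x y z, T x y z = T y x z) ∧ (∀ x y z, T x y z = T x z y) ∧ ∀ v, f v = T v v v

/-- The rank of a quadratic form: `dim V` minus the dimension of its radical
(the kernel of the polar bilinear form). -/
noncomputable def quadRank {k V : Type*} [Field k] [AddCommGroup V] [Module k V]
    (q : QuadraticForm k V) : ℕ :=
  Module.finrank k V - Module.finrank k (LinearMap.ker (QuadraticMap.polarBilin q))

theorem mm_quadRank_eq {k V : Type*} [Field k] [AddCommGroup V] [Module k V]
    [FiniteDimensional k V] (q : QuadraticForm k V) :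
    quadRank q = Module.finrank k (LinearMap.range (QuadraticMap.polarBilin q)) := by
  have := LinearMap.finrank_range_add_finrank_ker (QuadraticMap.polarBilin q)
  unfold quadRank
  omega

theorem mm_quadRank_add {k V : Type*} [Field k] [AddCommGroup V] [Module k V]
    [FiniteDimensional k V] (p q : QuadraticForm k V) :
    quadRank (p + q) ≤ quadRank p + quadRank q := by
  rw [mm_quadRank_eq, mm_quadRank_eq p, mm_quadRank_eq q]
  have h : LinearMap.range (QuadraticMap.polarBilin (p + q)) ≤
      LinearMap.range (QuadraticMap.polarBilin p) ⊔ LinearMap.range (QuadraticMap.polarBilin q) := by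
    rintro _ ⟨x, rfl⟩
    have : QuadraticMap.polarBilin (p + q) x
        = QuadraticMap.polarBilin p x + QuadraticMap.polarBilin q x := by
      ext y
      simp [QuadraticMap.polar]
      ring
    rw [this]
    exact Submodule.add_mem_sup ⟨x, rfl⟩ ⟨x, rfl⟩
  exact (Submodule.finrank_mono h).trans (Submodule.finrank_add_le_finrank_add_finrank _ _)

theorem mm_quadRank_smul {k V : Type*} [Field k] [AddCommGroup V] [Module k V]
    [FiniteDimensional k V] (c : k) (q : QuadraticForm k V) :
    quadRank (c • q) ≤ quadRank q := by
  rw [mm_quadRank_eq, mm_quadRank_eq q]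
  have h : LinearMap.range (QuadraticMap.polarBilin (c • q)) ≤
      LinearMap.range (QuadraticMap.polarBilin q) := by
    rintro _ ⟨x, rfl⟩
    refine ⟨c • x, ?_⟩
    ext y
    simp [QuadraticMap.polar_smul]
  exact Submodule.finrank_mono h

theorem mm_finite {k V : Type*} [Field k] (h2 : (2 : k) ≠ 0) [AddCommGroup V] [Module k V]
    [FiniteDimensional k V] : FiniteDimensional k (QuadraticForm k V) := by
  let f : QuadraticForm k V →ₗ[k] (V →ₗ[k] V →ₗ[k] k) :=
    { toFun := fun q => QuadraticMap.polarBilin q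
      map_add' := fun p q => by
        ext x y
        simp [QuadraticMap.polar]
        ring
      map_smul' := fun c q => by
        ext x y
        simp [QuadraticMap.polar_smul] }
  refine Module.Finite.of_injective f ?_
  rw [injective_iff_map_eq_zero]
  intro q hq
  ext x
  have h : QuadraticMap.polar q x x = 0 := by
    have := LinearMap.congr_fun (LinearMap.congr_fun hq x) x
    simpa [f] using this
  rw [QuadraticMap.polar_self] at h
  simpa [h2] using h

theorem mm_sub {k M : Type*} [Field k] [AddCommGroup M] [Module k M] [FiniteDimensional k M]
    (C : Submodule k M) (a : ℕ) (h : a ≤ Module.finrank k C) :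
    ∃ W ≤ C, Module.finrank k W = a := by
  have b := Module.finBasis k C
  have hli : LinearIndependent k (fun i : Fin a => ((b (Fin.castLE h i) : C) : M)) :=
    (b.linearIndependent.comp _ (Fin.castLE_injective h)).map' C.subtype C.ker_subtype
  refine ⟨_, ?_, (finrank_span_eq_card hli).trans (Fintype.card_fin a)⟩
  rw [Submodule.span_le]
  rintro _ ⟨i, rfl⟩
  exact (b (Fin.castLE h i)).2

theorem mm_inter {k M : Type*} [Field k] [AddCommGroup M] [Module k M] (rk : M → ℕ)
    (hadd : ∀ p q, rk (p + q) ≤ rk p + rk q) (hsmul : ∀ (c : k) p, rk (c • p) ≤ rk p)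
    (S : Set M) (t : ℕ) (hS : ∀ x ∈ S, rk x ≤ t) (p : M) (hp : p ∈ Submodule.span k S) :
    ∀ (n : ℕ) (c : k), ∀ q ∈ Submodule.span k S, rk q ≤ n → n < rk (q + c • p) →
      ∃ q' ∈ Submodule.span k S, n < rk q' ∧ rk q' ≤ n + t := by
  induction hp using Submodule.span_induction with
  | mem x hx =>
    intro n c q hq h1 h3
    refine ⟨_, add_mem hq (Submodule.smul_mem _ c (Submodule.subset_span hx)), h3, ?_⟩
    have := hadd q (c • x)
    have := hsmul c x
    have := hS x hx
    omega
  | zero =>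
    intro n c q hq h1 h3
    simp at h3
    omega
  | add x y hx hy ihx ihy =>
    intro n c q hq h1 h3
    by_cases h : n < rk (q + c • x)
    · exact ihx n c q hq h1 h
    · refine ihy n c (q + c • x) (add_mem hq (Submodule.smul_mem _ c hx)) (by omega) ?_
      rwa [add_assoc, ← smul_add]
  | smul d x hx ih =>
    intro n c q hq h1 h3
    rw [smul_smul] at h3
    exact ih n (c * d) q hq h1 h3

theorem mm_build {k M : Type*} [Field k] [AddCommGroup M] [Module k M] [FiniteDimensional k M]
    (rk : M → ℕ) (h0 : rk 0 = 0)
    (hadd : ∀ p q, rk (p + q) ≤ rk p + rk q) (hsmul : ∀ (c : k) p, rk (c • p) ≤ rk p)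
    (L : Submodule k M) (t a : ℕ)
    (hL : ∀ n < (2 ^ a - 1) * t + 1, ∃ q ∈ L, n < rk q ∧ rk q ≤ n + t) :
    ∀ b ≤ a, ∃ W ≤ L, Module.finrank k W = b ∧ (∀ p ∈ W, p ≠ 0 → t < rk p) ∧
      ∀ p ∈ W, rk p ≤ (2 ^ b - 1) * (2 * t) := by
  intro b
  induction b with
  | zero =>
    intro _
    refine ⟨⊥, bot_le, by simp, ?_, ?_⟩
    · intro p hp h
      exact absurd (by simpa using hp) h
    · intro p hp
      have : p = 0 := by simpa using hp
      simp [this, h0]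
  | succ b ih =>
    intro hb
    obtain ⟨W, hWL, hWd, hW1, hW2⟩ := ih (by omega)
    have hpow : 2 ^ (b + 1) ≤ 2 ^ a := Nat.pow_le_pow_right (by norm_num) hb
    obtain ⟨m, hm⟩ : ∃ m, 2 ^ b = m + 1 := ⟨2 ^ b - 1, by have := Nat.one_le_two_pow (n := b); omega⟩
    have hm2 : 2 ^ (b + 1) = 2 * m + 2 := by rw [pow_succ]; omega
    have hlt : m * (2 * t) + t < (2 ^ a - 1) * t + 1 := by
      have : (2 * m + 1) * t ≤ (2 ^ a - 1) * t := Nat.mul_le_mul_right _ (by omega)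
      nlinarith
    obtain ⟨q, hqL, hq1, hq2⟩ := hL _ hlt
    have e1 : 2 ^ b - 1 = m := by omega
    have e2 : 2 ^ (b + 1) - 1 = 2 * m + 1 := by omega
    rw [e1] at hW2
    rw [e2]
    have hqW : q ∉ W := fun h => by
      have := hW2 q h
      omega
    have hel : ∀ p ∈ W ⊔ Submodule.span k {q}, ∃ w ∈ W, ∃ c : k, w + c • q = p := by
      intro p hp
      obtain ⟨w, hw, z, hz, rfl⟩ := Submodule.mem_sup.1 hp
      obtain ⟨c, rfl⟩ := Submodule.mem_span_singleton.1 hz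
      exact ⟨w, hw, c, rfl⟩
    refine ⟨W ⊔ Submodule.span k {q}, sup_le hWL (by simpa using hqL), ?_, ?_, ?_⟩
    · have hq0 : q ≠ 0 := fun h => hqW (h ▸ W.zero_mem)
      have h1 := Submodule.finrank_sup_add_finrank_inf_eq W (Submodule.span k {q})
      have h3 : W ⊓ Submodule.span k {q} = ⊥ :=
        disjoint_iff.1 ((Submodule.disjoint_span_singleton' hq0).2 hqW)
      rw [h3, finrank_bot, finrank_span_singleton hq0] at h1
      omega
    · intro p hp hp0
      obtain ⟨w, hw, c, rfl⟩ := hel p hp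
      by_cases hc : c = 0
      · subst hc
        simp only [zero_smul, add_zero] at hp0 ⊢
        exact hW1 w hw hp0
      · have h1 : q = c⁻¹ • ((w + c • q) + (-1 : k) • w) := by
          rw [neg_one_smul, add_neg_cancel_comm, smul_smul, inv_mul_cancel₀ hc, one_smul]
        have h3 := hsmul c⁻¹ ((w + c • q) + (-1 : k) • w)
        rw [← h1] at h3
        have h4 := hadd (w + c • q) ((-1 : k) • w)
        have h5 := hsmul (-1) w
        have h6 := hW2 w hw
        omega
    · intro p hp
      obtain ⟨w, hw, c, rfl⟩ := hel p hp
      have h4 := hadd w (c • q)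
      have h5 := hsmul c q
      have h6 := hW2 w hw
      nlinarith

/-- Minrank from maxrank: if every subspace `Q' ⊆ Q` contains a form `q` with
`dim(Q/Q') + rank(q) ≥ r`, and `(2^a - 1)(s - 1) + a ≤ r`, then `Q` contains an
`a`-dimensional subspace all of whose nonzero elements have rank at least `s`. -/
theorem minrank_from_maxrank {k : Type*} [Field k]
    (h2 : (2 : k) ≠ 0)
    {V : Type*} [AddCommGroup V] [Module k V] [FiniteDimensional k V]
    (Q : Submodule k (QuadraticForm k V)) (r : ℕ) (hr : 0 < r)
    (hmax : ∀ Q' ≤ Q, ∃ p ∈ Q',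
      r ≤ (Module.finrank k Q - Module.finrank k Q') + quadRank p)
    (a s : ℕ) (ha : 0 < a) (hs : 0 < s)
    (hineq : (2 ^ a - 1) * (s - 1) + a ≤ r) :
    ∃ Q' ≤ Q, Module.finrank k Q' = a ∧
      ∀ p ∈ Q', p ≠ 0 → s ≤ quadRank p := by
  classical
  have := mm_finite (V := V) h2
  set t := s - 1 with ht
  let S : Set (QuadraticForm k V) := {q | q ∈ Q ∧ quadRank q ≤ t}
  have hLQ : Submodule.span k S ≤ Q := Submodule.span_le.2 fun x hx => hx.1
  have h0 : quadRank (0 : QuadraticForm k V) = 0 := by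
    rw [mm_quadRank_eq]
    have : QuadraticMap.polarBilin (0 : QuadraticForm k V) = 0 := by
      ext x y
      simp [QuadraticMap.polar]
    rw [this, LinearMap.range_zero, finrank_bot]
  have hadd : ∀ p q : QuadraticForm k V, quadRank (p + q) ≤ quadRank p + quadRank q :=
    fun p q => mm_quadRank_add p q
  have hsmul : ∀ (c : k) (p : QuadraticForm k V), quadRank (c • p) ≤ quadRank p :=
    fun c p => mm_quadRank_smul c p
  obtain ⟨p, hpL, hp⟩ := hmax _ hLQ
  by_cases hbig : (2 ^ a - 1) * t < quadRank p
  · have hint : ∀ n < (2 ^ a - 1) * t + 1, ∃ q ∈ Submodule.span k S,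
        n < quadRank q ∧ quadRank q ≤ n + t := by
      intro n hn
      refine mm_inter (k := k) (M := QuadraticForm k V) (quadRank (k := k) (V := V)) hadd hsmul S t ?_ p hpL
          n 1 0 (zero_mem _) ?_ ?_
      · intro x hx
        exact hx.2
      · rw [h0]
        exact Nat.zero_le _
      · rw [one_smul, zero_add]
        exact lt_of_lt_of_le hn hbig
    obtain ⟨W, hWL, hWd, hW, -⟩ := mm_build (k := k) (M := QuadraticForm k V) (quadRank (k := k) (V := V)) h0
      hadd hsmul (Submodule.span k S) t a hint a le_rfl
    refine ⟨W, hWL.trans hLQ, hWd, fun q hq hq0 => ?_⟩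
    have := hW q hq hq0
    omega
  · obtain ⟨C, hC⟩ := Submodule.exists_isCompl (Submodule.span k S)
    have hdim : a ≤ Module.finrank k (C ⊓ Q : Submodule k (QuadraticForm k V)) := by
      have h1 := Submodule.finrank_sup_add_finrank_inf_eq (Submodule.span k S) (C ⊓ Q)
      have h3 : Submodule.span k S ⊔ C ⊓ Q = Q := by
        rw [← sup_inf_assoc_of_le C hLQ, hC.sup_eq_top, top_inf_eq]
      rw [h3] at h1
      have h4 : Submodule.span k S ⊓ (C ⊓ Q) = ⊥ := by
        rw [← inf_assoc, hC.inf_eq_bot, bot_inf_eq]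
      rw [h4, finrank_bot] at h1
      omega
    obtain ⟨W, hW, hWd⟩ := mm_sub _ _ hdim
    refine ⟨W, hW.trans inf_le_right, hWd, fun q hq hq0 => ?_⟩
    by_contra hlt
    have hqS : q ∈ Submodule.span k S :=
      Submodule.subset_span ⟨(hW hq).2, by omega⟩
    have : q ∈ Submodule.span k S ⊓ C := ⟨hqS, (hW hq).1⟩
    rw [hC.inf_eq_bot] at this
    exact hq0 (by simpa using this)
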